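/- Let G be a Gauss code, let i be a point of G with label (c, x), and let α and α' be the arcs immediately preceding and immediately following i. Then λ(α') = λ(α) − ε(c) if x = O, and λ(α') = λ(α) + ε(c) if x = U. (Thus λ satisfies the Cheng coloring rule at every classical crossing, so every virtual knot diagram admits a Cheng coloring.) -/

import Mathlib

open Finset

/-- A Gauss code with `n` crossings: the `2*n` points are arranged in the cyclic order
`0, 1, …, 2*n - 1` on `Fin (2*n)`; each pair `(c, x)` of a crossing `c : Fin n` and a
label `x : Bool` (`true` = O = over, `false` = U = under) occupies a distinct point
`pt (c, x)`, and each crossing carries a sign `±1`. -/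
structure GaussCode (n : ℕ) where
  pt : Fin n × Bool → Fin (2 * n)
  inj : Function.Injective pt
  sign : Fin n → ℤ
  sign_unit : ∀ c, sign c = 1 ∨ sign c = -1

namespace GaussCode

/-- The cyclic distance from `i` forward to `j` in `Fin m`. -/
def cdist {m : ℕ} (i j : Fin m) : ℕ := (j.val + m - i.val) % m

/-- The cyclically next point after `i`. -/
def next {m : ℕ} (i : Fin m) : Fin m := ⟨(i.val + 1) % m, Nat.mod_lt _ i.pos⟩

variable {n : ℕ}

/-- `firstO G i c` holds when the first occurrence of the crossing `c`, reading the
points cyclically forward starting from the arc immediately preceding the point `i`,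
carries the label O. (Arcs are indexed by the point they immediately precede.) -/
def firstO (G : GaussCode n) (i : Fin (2 * n)) (c : Fin n) : Prop :=
  cdist i (G.pt (c, true)) < cdist i (G.pt (c, false))

instance (G : GaussCode n) (i : Fin (2 * n)) (c : Fin n) : Decidable (G.firstO i c) :=
  inferInstanceAs (Decidable (_ < _))

/-- The Cheng coloring `λ` of the arc immediately preceding the point `i`: the sum of
`ε c` over all crossings `c` whose first occurrence, reading cyclically forward from
this arc, carries the label O. -/
def lam (G : GaussCode n) (i : Fin (2 * n)) : ℤ :=
  ∑ c : Fin n, if G.firstO i c then G.sign c else 0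

/-- The writhe of a Gauss code: the sum of the signs of its crossings. -/
def wr (G : GaussCode n) : ℤ := ∑ c : Fin n, G.sign c

/-- The weight `W(c) = λ_O(c) - λ_U(c) - ε(c)` of a crossing `c`, where `λ_O(c)`
(resp. `λ_U(c)`) is `λ` of the arc immediately preceding the O (resp. U) point of `c`. -/
def W (G : GaussCode n) (c : Fin n) : ℤ :=
  G.lam (G.pt (c, true)) - G.lam (G.pt (c, false)) - G.sign c

open LaurentPolynomial in
/-- The affine index polynomial `P_G(t) = Σ_c ε(c) (t^{W(c)} - 1) ∈ ℤ[t,t⁻¹]`. -/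
noncomputable def P (G : GaussCode n) : LaurentPolynomial ℤ :=
  ∑ c : Fin n, G.sign c • (T (G.W c) - 1)

end GaussCode

namespace GaussCode

section CyclicDistance

variable {m : ℕ}

theorem cdist_eq_ite (i j : Fin m) :
    cdist i j = if i.val ≤ j.val then j.val - i.val else j.val + m - i.val := by
  have hi := i.isLt
  have hj := j.isLt
  unfold cdist
  split_ifs with h
  · rw [show j.val + m - i.val = j.val - i.val + m by omega, Nat.add_mod_right,
      Nat.mod_eq_of_lt (by omega)]
  · exact Nat.mod_eq_of_lt (by omega)

theorem val_next (i : Fin m) :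
    (next i).val = if i.val + 1 = m then 0 else i.val + 1 := by
  have hi := i.isLt
  change (i.val + 1) % m = _
  split_ifs with h
  · rw [h, Nat.mod_self]
  · exact Nat.mod_eq_of_lt (by omega)

theorem cdist_self (i : Fin m) : cdist i i = 0 := by
  simp [cdist_eq_ite]

theorem cdist_lt (i j : Fin m) : cdist i j < m :=
  Nat.mod_lt _ i.pos

theorem cdist_next_self (i : Fin m) : cdist (next i) i + 1 = m := by
  have hi := i.isLt
  rw [cdist_eq_ite, val_next]
  split_ifs <;> omega

theorem cdist_next_of_ne {i j : Fin m} (h : j ≠ i) : cdist (next i) j + 1 = cdist i j := by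
  have hi := i.isLt
  have hj := j.isLt
  have hne : j.val ≠ i.val := Fin.val_ne_of_ne h
  rw [cdist_eq_ite, cdist_eq_ite, val_next]
  split_ifs <;> omega

end CyclicDistance

section FirstOccurrence

variable {n : ℕ} (G : GaussCode n)

/-- Passing a point of one crossing does not affect the first occurrence of another. -/
theorem firstO_next_iff_of_ne {c d : Fin n} (x : Bool) (h : d ≠ c) :
    G.firstO (next (G.pt (c, x))) d ↔ G.firstO (G.pt (c, x)) d := by
  have hne (y : Bool) : G.pt (d, y) ≠ G.pt (c, x) := fun e =>
    h (congrArg Prod.fst (G.inj e))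
  have hO := cdist_next_of_ne (hne true)
  have hU := cdist_next_of_ne (hne false)
  unfold firstO
  omega

theorem firstO_pt_self_iff (c : Fin n) (x : Bool) : G.firstO (G.pt (c, x)) c ↔ x = true := by
  have hne : cdist (G.pt (c, true)) (G.pt (c, false)) ≠ 0 := by
    have h : G.pt (c, false) ≠ G.pt (c, true) := fun e => by simpa using G.inj e
    have := cdist_next_of_ne h
    omega
  cases x
  · simp [firstO, cdist_self]
  · simpa [firstO, cdist_self] using Nat.pos_of_ne_zero hne

theorem firstO_next_pt_self_iff (c : Fin n) (x : Bool) :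
    G.firstO (next (G.pt (c, x))) c ↔ x = false := by
  have h : G.pt (c, !x) ≠ G.pt (c, x) := fun e => by simpa using G.inj e
  have hself := cdist_next_self (G.pt (c, x))
  have hother := cdist_next_of_ne h
  have hlt := cdist_lt (G.pt (c, x)) (G.pt (c, !x))
  cases x <;> simp [firstO] at * <;> omega

/-- Passing a point changes `λ` only through the contribution of its own crossing. -/
theorem lam_next_sub_lam (c : Fin n) (x : Bool) :
    G.lam (next (G.pt (c, x))) - G.lam (G.pt (c, x)) =
      (if x = false then G.sign c else 0) - (if x = true then G.sign c else 0) := by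
  unfold lam
  rw [← Finset.sum_sub_distrib, Finset.sum_eq_single c]
  · simp only [firstO_next_pt_self_iff, firstO_pt_self_iff]
  · intro d _ hd
    simp only [G.firstO_next_iff_of_ne x hd, sub_self]
  · simp

end FirstOccurrence

/-- Let `G` be a Gauss code and let `i = pt (c, x)` be the point of `G`
labelled `(c, x)`.  The arc immediately preceding `i` is indexed by `i` and the arc
immediately following `i` is indexed by `next i`.  Then `λ(α') = λ(α) - ε(c)` if
`x = O` and `λ(α') = λ(α) + ε(c)` if `x = U`: `λ` satisfies the Cheng coloring rule at
every classical crossing, so every virtual knot diagram admits a Cheng coloring. -/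
theorem lam_next_eq {n : ℕ} (G : GaussCode n) (c : Fin n) (x : Bool) (i : Fin (2 * n))
    (hi : G.pt (c, x) = i) :
    (x = true → G.lam (next i) = G.lam i - G.sign c) ∧
    (x = false → G.lam (next i) = G.lam i + G.sign c) := by
  subst hi
  have h := G.lam_next_sub_lam c x
  constructor <;> rintro rfl <;> simp at h <;> linarith

end GaussCode
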